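/- arXiv:1907.01999 — 2 statements merged into one kernel-verified Lean document; each statement's English description precedes it below -/
import Mathlib

section
/- The homotopy category functor ho : sSet → Cat (the left adjoint of the simplicial nerve functor) preserves finite products: for simplicial sets X and Y, the canonical functor ho(X × Y) → ho(X) × ho(Y) is an isomorphism of categories, and ho of the terminal simplicial set is the terminal category. -/
/-!
The homotopy category functor `ho : sSet ⥤ Cat` (the left adjoint of the simplicial
nerve functor) preserves finite products: the canonical comparison functor
`ho (X × Y) ⟶ ho X × ho Y` is an isomorphism of categories (an isomorphism in `Cat`),
and `ho` of the terminal simplicial set is the terminal category.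
-/

open CategoryTheory CategoryTheory.Limits

namespace Stmt5

theorem ho_preserves_finite_products
    (ho : SSet.{0} ⥤ Cat.{0, 0}) (adj : ho ⊣ nerveFunctor) :
    (∀ X Y : SSet.{0}, IsIso (prodComparison ho X Y)) ∧
      IsIso (terminalComparison ho) := by
  let e : SSet.hoFunctor.{0} ≅ ho := nerveAdjunction.leftAdjointUniq adj
  haveI : PreservesFiniteProducts SSet.hoFunctor.{0} := inferInstance
  haveI : PreservesFiniteProducts ho :=
    ⟨fun _ => preservesLimitsOfShape_of_natIso e⟩
  exact ⟨fun X Y => inferInstance, inferInstance⟩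

end Stmt5
end

section
/- A quasi-category X is a Kan complex if and only if its homotopy category ho(X) is a groupoid. -/
/-!
A quasi-category `X` is a Kan complex if and only if its homotopy category `ho X` is a
groupoid, where `ho : sSet ⥤ Cat` denotes the homotopy category functor, i.e. the left
adjoint of the simplicial nerve functor.
-/

open CategoryTheory

namespace Stmt6

section
open Opposite Simplicial

/-- The morphism of the simplex category attached to a monotone map. -/
def mkH {d e : SimplexCategory} (φ : Fin (d.len + 1) → Fin (e.len + 1)) (h : Monotone φ) : d ⟶ e :=
  SimplexCategory.Hom.mk ⟨φ, h⟩

lemma mkH_self {d e : SimplexCategory} (f : d ⟶ e) :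
    mkH f.toOrderHom f.toOrderHom.monotone = f := by
  ext; rfl

structure PMap (X : SSet.{0}) (V : Type) [Preorder V] (K : Set V → Prop) where
  app : ∀ {d : SimplexCategory} (φ : Fin (d.len + 1) → V), Monotone φ → K (Set.range φ) →
    X.obj (op d)
  nat : ∀ {d d' : SimplexCategory} (θ : d' ⟶ d) (φ : Fin (d.len + 1) → V) (hm : Monotone φ)
    (hK : K (Set.range φ)) (hm' : Monotone (φ ∘ θ.toOrderHom))
    (hK' : K (Set.range (φ ∘ θ.toOrderHom))),
    X.map θ.op (app φ hm hK) = app (φ ∘ θ.toOrderHom) hm' hK'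

namespace PMap

variable {X : SSet.{0}} {V W : Type} [Preorder V] [Preorder W]

lemma app_congr {K : Set V → Prop} (F : PMap X V K) {d : SimplexCategory}
    {φ ψ : Fin (d.len + 1) → V} (h : φ = ψ) (hm : Monotone φ) (hK : K (Set.range φ))
    (hm' : Monotone ψ) (hK' : K (Set.range ψ)) : F.app φ hm hK = F.app ψ hm' hK' := by
  subst h; rfl

/-- restriction -/
def res {K K' : Set V → Prop} (F : PMap X V K) (h : ∀ S, K' S → K S) : PMap X V K' where
  app φ hm hK := F.app φ hm (h _ hK)
  nat θ φ hm hK hm' hK' := F.nat θ φ hm _ hm' _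

/-- pullback -/
def pull {K : Set W → Prop} (F : PMap X W K) (r : V → W) (K' : Set V → Prop)
    (h : ∀ S, K' S → MonotoneOn r S ∧ K (r '' S)) : PMap X V K' where
  app φ hm hK := F.app (r ∘ φ)
    (fun a b hab => (h _ hK).1 (Set.mem_range_self a) (Set.mem_range_self b) (hm hab))
    (by rw [Set.range_comp]; exact (h _ hK).2)
  nat θ φ hm hK hm' hK' := F.nat θ (r ∘ φ) _ _ _ _

open Classical in
/-- gluing -/
noncomputable def glue {K K' : Set V → Prop} (F : PMap X V K) (G : PMap X V K')
    (hK : ∀ S T, S ⊆ T → K T → K S) (hK' : ∀ S T, S ⊆ T → K' T → K' S)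
    (hFG : ∀ {d : SimplexCategory} (φ : Fin (d.len + 1) → V) (hm : Monotone φ)
      (h : K (Set.range φ)) (h' : K' (Set.range φ)), F.app φ hm h = G.app φ hm h') :
    PMap X V (fun S => K S ∨ K' S) where
  app φ hm h := if h1 : K (Set.range φ) then F.app φ hm h1 else
    G.app φ hm (h.resolve_left h1)
  nat θ φ hm h hm' h' := by
    have hs : Set.range (φ ∘ θ.toOrderHom) ⊆ Set.range φ := Set.range_comp_subset_range _ _
    by_cases h1 : K (Set.range φ)
    · have h2 : K (Set.range (φ ∘ θ.toOrderHom)) := hK _ _ hs h1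
      simp only [dif_pos h1, dif_pos h2]
      exact F.nat _ _ _ _ _ _
    · have h1' := h.resolve_left h1
      have h2' : K' (Set.range (φ ∘ θ.toOrderHom)) := hK' _ _ hs h1'
      simp only [dif_neg h1]
      rw [G.nat θ φ hm h1' hm' h2']
      split_ifs with h2
      · exact (hFG _ _ _ _).symm
      · rfl

lemma glue_left {K K' : Set V → Prop} (F : PMap X V K) (G : PMap X V K') (hK hK' hFG)
    {d : SimplexCategory} (φ : Fin (d.len + 1) → V) (hm : Monotone φ)
    (h : K (Set.range φ)) (h') : (F.glue G hK hK' hFG).app φ hm h' = F.app φ hm h := by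
  simp [glue, h]

lemma glue_right {K K' : Set V → Prop} (F : PMap X V K) (G : PMap X V K') (hK hK' hFG)
    {d : SimplexCategory} (φ : Fin (d.len + 1) → V) (hm : Monotone φ)
    (h : K' (Set.range φ)) (h') : (F.glue G hK hK' hFG).app φ hm h' = G.app φ hm h := by
  by_cases h1 : K (Set.range φ)
  · rw [glue_left _ _ _ _ _ _ _ h1]; exact hFG _ _ _ _
  · simp [glue, h1]

/-- the total map given by a simplex -/
def ofSimplex {n : SimplexCategory} (x : X.obj (op n)) :
    PMap X (Fin (n.len + 1)) (fun _ => True) where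
  app φ hm _ := X.map (mkH φ hm).op x
  nat θ φ hm _ hm' _ := by
    rw [← Functor.map_comp_apply]; rfl

end PMap

/-- subsets in the horn -/
def hornK {n : ℕ} (i : Fin (n + 1)) (S : Set (Fin (n + 1))) : Prop := ∃ j, j ≠ i ∧ j ∉ S

lemma mem_horn_mkH {n : ℕ} (i : Fin (n + 1)) {d : SimplexCategory}
    (θ : d ⟶ ⦋n⦌) :
    (SSet.stdSimplex.objEquiv.symm θ : (Δ[n] : SSet.{0}).obj (op d)) ∈ (Λ[n, i] : (Δ[n]).Subcomplex).obj (op d) ↔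
      hornK i (Set.range θ.toOrderHom) :=
  SSet.mem_horn_iff_notMem_range (d := d.len) _ i |>.trans (by simp [hornK]; rfl)

/-- the partial map attached to a horn -/
noncomputable def ofHorn {X : SSet.{0}} {n : ℕ} {i : Fin (n + 1)} (H : (Λ[n, i] : SSet.{0}) ⟶ X) :
    PMap X (Fin (n + 1)) (hornK i) where
  app φ hm hK := H.app _ ⟨SSet.stdSimplex.objEquiv.symm (mkH (e := ⦋n⦌) φ hm),
    (mem_horn_mkH i _).2 hK⟩
  nat θ φ hm hK hm' hK' := by
    exact (NatTrans.naturality_apply H θ.op _).symm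

/-- the horn attached to a partial map -/
noncomputable def toHorn {X : SSet.{0}} {n : ℕ} {i : Fin (n + 1)} (F : PMap X (Fin (n + 1)) (hornK i)) :
    (Λ[n, i] : SSet.{0}) ⟶ X where
  app d := TypeCat.ofHom fun s => F.app (d := d.unop) (SSet.stdSimplex.objEquiv s.1).toOrderHom
    (SSet.stdSimplex.objEquiv s.1).toOrderHom.monotone ((mem_horn_mkH i _).1 (by simpa using s.2))
  naturality d d' θ := by
    ext s
    exact (F.nat θ.unop _ _ _ _ _).symm

/-- horn filling in terms of partial maps. -/
def Fill (X : SSet.{0}) (n : ℕ) (i : Fin (n + 1)) : Prop :=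
  ∀ F : PMap X (Fin (n + 1)) (hornK i), ∃ x : X _⦋n⦌,
    ∀ {d : SimplexCategory} (φ : Fin (d.len + 1) → Fin (n + 1)) (hm : Monotone φ)
      (h : hornK i (Set.range φ)), F.app φ hm h = X.map (mkH (e := ⦋n⦌) φ hm).op x

lemma fill_iff {X : SSet.{0}} {n : ℕ} {i : Fin (n + 1)} :
    Fill X n i ↔ ∀ (H : (Λ[n, i] : SSet.{0}) ⟶ X), ∃ σ : Δ[n] ⟶ X, H = Λ[n, i].ι ≫ σ := by
  constructor
  · intro h H
    obtain ⟨x, hx⟩ := h (ofHorn H)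
    refine ⟨SSet.yonedaEquiv.symm x, ?_⟩
    apply NatTrans.ext
    funext d
    apply ConcreteCategory.hom_ext
    rintro ⟨s, hs⟩
    obtain ⟨d⟩ := d
    obtain ⟨f, rfl⟩ := SSet.stdSimplex.objEquiv.symm.surjective s
    have h1 := hx (d := d) f.toOrderHom f.toOrderHom.monotone ((mem_horn_mkH i f).1 hs)
    have h2 : (ofHorn H).app f.toOrderHom f.toOrderHom.monotone ((mem_horn_mkH i f).1 hs)
      = H.app (op d) ⟨SSet.stdSimplex.objEquiv.symm f, hs⟩ := by
      unfold ofHorn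
      simp only [mkH_self]
    have h3 : X.map f.op x = (Λ[n, i].ι ≫ SSet.yonedaEquiv.symm x).app (op d)
       ⟨SSet.stdSimplex.objEquiv.symm f, hs⟩ := rfl
    rw [mkH_self] at h1
    exact h2.symm.trans (h1.trans h3)
  · intro h F
    obtain ⟨σ, hσ⟩ := h (toHorn F)
    refine ⟨SSet.yonedaEquiv σ, fun {d} φ hm hK => ?_⟩
    have h1 : F.app φ hm hK = (toHorn F).app (op d)
      ⟨SSet.stdSimplex.objEquiv.symm (mkH (e := ⦋n⦌) φ hm), (mem_horn_mkH i _).2 hK⟩ := rfl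
    rw [h1, hσ]
    have : σ = SSet.yonedaEquiv.symm (SSet.yonedaEquiv σ) := by simp
    conv_lhs => rw [this]
    rfl

end

section
open Opposite Simplicial

/-- all inner horns have fillers -/
def Inner (X : SSet.{0}) : Prop :=
  ∀ (n : ℕ) (i : Fin (n + 1)), 0 < i → i < Fin.last n → Fill X n i

lemma ext_one {X : SSet.{0}} (hX : Inner X) {V : Type} [LinearOrder V] {K : Set V → Prop}
    (F : PMap X V K) (hK : ∀ S T, S ⊆ T → K T → K S) (T : Finset V) (v : V) (hv : v ∈ T)
    (ha : ∃ a ∈ T, a < v) (hb : ∃ b ∈ T, v < b)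
    (hT : ∀ j ∈ T, j ≠ v → K ((T : Set V) \ {j})) (hTv : ¬ K ((T : Set V) \ {v})) :
    ∃ G : PMap X V (fun S => K S ∨ S ⊆ T),
      ∀ {d : SimplexCategory} (φ : Fin (d.len + 1) → V) (hm : Monotone φ)
        (h : K (Set.range φ)), G.app φ hm (Or.inl h) = F.app φ hm h := by
  obtain ⟨m, hm⟩ : ∃ m, T.card = m + 1 :=
    ⟨T.card - 1, by have := Finset.card_pos.2 ⟨v, hv⟩; omega⟩
  let e := T.orderEmbOfFin hm
  have hre : Set.range e = T := Finset.range_orderEmbOfFin T hm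
  have hes : ∀ t ∈ T, ∃ j, e j = t := fun t ht => by
    have : t ∈ Set.range e := by rw [hre]; exact ht
    exact this
  have heT : ∀ j, e j ∈ T := fun j => by
    have : e j ∈ (T : Set V) := by rw [← hre]; exact ⟨j, rfl⟩
    exact this
  obtain ⟨i, rfl⟩ := hes v hv
  obtain ⟨a, haT, hai⟩ := ha
  obtain ⟨a, rfl⟩ := hes a haT
  obtain ⟨b, hbT, hbi⟩ := hb
  obtain ⟨b, rfl⟩ := hes b hbT
  have h0 : 0 < i := lt_of_le_of_lt (Fin.zero_le a) (e.lt_iff_lt.1 hai)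
  have h1 : i < Fin.last m := lt_of_lt_of_le (e.lt_iff_lt.1 hbi) (Fin.le_last b)
  obtain ⟨x, hx⟩ := hX m i h0 h1 (F.pull e (hornK i) (by
    rintro S ⟨j, hj, hjS⟩
    refine ⟨e.monotone.monotoneOn _, hK _ _ ?_ (hT (e j) (heT j) (by simpa using hj))⟩
    rintro _ ⟨k, hk, rfl⟩
    refine ⟨heT k, ?_⟩
    simp only [Set.mem_singleton_iff, EmbeddingLike.apply_eq_iff_eq]
    rintro rfl
    exact hjS hk))
  let g : V → Fin (m + 1) := Function.invFun e
  have hge : ∀ j, g (e j) = j := Function.leftInverse_invFun e.injective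
  have heg : ∀ t ∈ T, e (g t) = t := fun t ht => by
    obtain ⟨j, rfl⟩ := hes t ht
    rw [hge]
  let G' : PMap X V (fun S => S ⊆ (T : Set V)) :=
    (PMap.ofSimplex (n := ⦋m⦌) x).pull g _ (fun S hS => ⟨by
      intro s hs t ht hst
      rw [← e.le_iff_le, heg s (hS hs), heg t (hS ht)]
      exact hst, trivial⟩)
  refine ⟨F.glue G' hK (fun S U h h' => h.trans h') ?_, ?_⟩
  · intro d φ hm h h'
    have hj : hornK i (Set.range (g ∘ φ)) := by
      by_contra hc
      apply hTv
      refine hK _ _ ?_ h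
      rintro t ⟨ht, htv⟩
      obtain ⟨j, rfl⟩ := hes t ht
      by_contra hc'
      refine hc ⟨j, fun hji => htv (by rw [hji]; rfl), ?_⟩
      rintro ⟨k, hk⟩
      apply hc'
      refine ⟨k, ?_⟩
      rw [← heg (φ k) (h' ⟨k, rfl⟩)]
      exact congrArg e hk
    have hgm : Monotone (g ∘ φ) := by
      intro s t hst
      have hs := heg (φ s) (h' ⟨s, rfl⟩)
      have ht := heg (φ t) (h' ⟨t, rfl⟩)
      rw [← e.le_iff_le]
      simp only [Function.comp]
      rw [hs, ht]; exact hm hst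
    have := hx (g ∘ φ) hgm hj
    refine Eq.trans (F.app_congr ?_ _ _ _ _) this
    funext k
    exact (heg (φ k) (h' ⟨k, rfl⟩)).symm
  · intro d φ hm h
    exact PMap.glue_left _ _ _ _ _ _ _ h _

lemma ext_key {X : SSet.{0}} (hX : Inner X) {V : Type} [LinearOrder V] [Fintype V]
    (L : Set V → Prop) (hL : ∀ S T, S ⊆ T → L T → L S) (v : V) :
    ∀ (N : ℕ) {K : Set V → Prop} (F : PMap X V K) (_ : ∀ S T, S ⊆ T → K T → K S)
    (_ : ∀ S, K S → L S)
    (_ : ∀ S, L S → ¬ K S → L (insert v S) ∧ ¬ K (S \ {v}) ∧ (∃ a ∈ S, a < v) ∧ ∃ b ∈ S, v < b)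
    (_ : {S | L S ∧ ¬ K S}.ncard = N),
    ∃ G : PMap X V L, ∀ {d : SimplexCategory} (φ : Fin (d.len + 1) → V) (hm : Monotone φ)
        (h : K (Set.range φ)) (h' : L (Set.range φ)), G.app φ hm h' = F.app φ hm h := by
  intro N
  induction N using Nat.strong_induction_on with
  | _ N ih =>
  intro K F hK hKL h hN
  by_cases hne : ∃ S, L S ∧ ¬ K S
  · obtain ⟨S, hS⟩ := Set.Finite.exists_minimal (Set.toFinite {S | L S ∧ ¬ K S}) hne
    obtain ⟨hS1, hS2⟩ := hS
    obtain ⟨hSL, hSK⟩ := hS1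
    have hvS : v ∉ S := by
      intro hv
      have h3 := (h S hSL hSK).2.1
      have := hS2 (y := S \ {v}) ⟨hL _ _ Set.sdiff_subset hSL, h3⟩ Set.sdiff_subset hv
      exact this.2 rfl
    obtain ⟨hins, -, ⟨a, ha, hav⟩, ⟨b, hb, hbv⟩⟩ := h S hSL hSK
    have hT' : ((insert v S).toFinite.toFinset : Set V) = insert v S := by simp
    obtain ⟨G, hG⟩ := ext_one hX F hK (insert v S).toFinite.toFinset v (by simp)
      ⟨a, by simp [ha], hav⟩ ⟨b, by simp [hb], hbv⟩ (by
        rw [hT']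
        intro j hj hjv
        have hj' : j ∈ S := by simpa [hjv] using hj
        by_contra hc
        have hLj : L (insert v S \ {j}) := hL _ _ Set.sdiff_subset hins
        have h3 := (h _ hLj hc).2.1
        have := hS2 (y := (insert v S \ {j}) \ {v}) ⟨hL _ _ Set.sdiff_subset hLj, h3⟩
          (by rintro s ⟨⟨hs, _⟩, hs'⟩; exact hs.resolve_left hs') hj'
        exact this.1.2 rfl) (by
        rw [hT']
        intro hc
        exact hSK (hK _ _ (fun s hs => by
          refine ⟨Or.inr hs, fun hsv => hvS ?_⟩
          rw [← Set.mem_singleton_iff.1 hsv]; exact hs) hc))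
    have hsub : {S' | L S' ∧ ¬ (K S' ∨ S' ⊆ ((insert v S).toFinite.toFinset : Set V))} ⊂
        {S' | L S' ∧ ¬ K S'} := by
      refine ⟨fun S' hS' => ⟨hS'.1, fun hc => hS'.2 (Or.inl hc)⟩, fun hc => ?_⟩
      refine (hc (a := S) ⟨hSL, hSK⟩).2 (Or.inr ?_)
      rw [hT']; exact Set.subset_insert _ _
    obtain ⟨G', hG'⟩ := ih _ (by
      rw [← hN]; exact Set.ncard_lt_ncard hsub (Set.toFinite _)) G
      (fun A B hAB hB => hB.imp (hK _ _ hAB) (hAB.trans)) (by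
        rintro A (hA | hA)
        · exact hKL _ hA
        · rw [hT'] at hA; exact hL _ _ hA hins) (by
        intro A hA hA'
        rw [not_or, hT'] at hA'
        obtain ⟨h1, h2, h3⟩ := h A hA hA'.1
        refine ⟨h1, ?_, h3⟩
        rw [not_or, hT']
        refine ⟨h2, fun hc => hA'.2 fun s hs => ?_⟩
        by_cases hsv : s = v
        · exact Or.inl hsv
        · exact hc ⟨hs, hsv⟩) rfl
    refine ⟨G', fun φ hm h h' => ?_⟩
    rw [hG' φ hm (Or.inl h) h', hG φ hm h]
  · have hLK : ∀ S, L S → K S := fun S hS => by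
      by_contra hc; exact hne ⟨S, hS, hc⟩
    exact ⟨F.res hLK, fun _ _ _ _ => rfl⟩

end

section
open Opposite Simplicial

lemma fill_faces {X : SSet.{0}} {n : ℕ} {i : Fin (n + 3)} (h : Fill X (n + 2) i)
    (f : Fin (n + 3) → X _⦋n + 1⦌)
    (hf : ∀ (j k : Fin (n + 3)) (_ : j ≠ i) (_ : k ≠ i) (hjk : j < k),
      X.δ (k.pred (Fin.ne_zero_of_lt hjk)) (f j) = X.δ (j.castPred (Fin.ne_last_of_lt hjk)) (f k)) :
    ∃ x : X _⦋n + 2⦌, ∀ j, j ≠ i → X.δ j x = f j := by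
  have hc : SSet.horn.IsCompatible (i := i) (fun j _ => SSet.yonedaEquiv.symm (f j)) := by
    rw [SSet.horn.isCompatible_iff]
    intro j k hj hk hjk
    rw [SSet.stdSimplex.δ_comp_yonedaEquiv_symm, SSet.stdSimplex.δ_comp_yonedaEquiv_symm,
      hf j k hj hk hjk]
  obtain ⟨φ, hφ⟩ := hc.exists_desc
  obtain ⟨σ, hσ⟩ := fill_iff.1 h φ
  refine ⟨SSet.yonedaEquiv σ, fun j hj => ?_⟩
  rw [← SSet.stdSimplex.yonedaEquiv_δ_comp, ← Equiv.eq_symm_apply, ← hφ j hj, hσ,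
    SSet.horn.ι_ι_assoc]

lemma fill2 {X : SSet.{0}} {i : Fin 3} (h : Fill X 2 i) (f : Fin 3 → X _⦋1⦌)
    (h01 : i ≠ 0 → i ≠ 1 → X.δ 0 (f 0) = X.δ 0 (f 1))
    (h02 : i ≠ 0 → i ≠ 2 → X.δ 1 (f 0) = X.δ 0 (f 2))
    (h12 : i ≠ 1 → i ≠ 2 → X.δ 1 (f 1) = X.δ 1 (f 2)) :
    ∃ x : X _⦋2⦌, ∀ j, j ≠ i → X.δ j x = f j := by
  apply fill_faces h
  intro j k hj hk hjk
  fin_cases j <;> fin_cases k <;> try (exact absurd hjk (by decide))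
  · exact h01 hj.symm hk.symm
  · exact h02 hj.symm hk.symm
  · exact h12 hj.symm hk.symm

lemma fill3 {X : SSet.{0}} {i : Fin 4} (h : Fill X 3 i) (f : Fin 4 → X _⦋2⦌)
    (h01 : i ≠ 0 → i ≠ 1 → X.δ 0 (f 0) = X.δ 0 (f 1))
    (h02 : i ≠ 0 → i ≠ 2 → X.δ 1 (f 0) = X.δ 0 (f 2))
    (h03 : i ≠ 0 → i ≠ 3 → X.δ 2 (f 0) = X.δ 0 (f 3))
    (h12 : i ≠ 1 → i ≠ 2 → X.δ 1 (f 1) = X.δ 1 (f 2))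
    (h13 : i ≠ 1 → i ≠ 3 → X.δ 2 (f 1) = X.δ 1 (f 3))
    (h23 : i ≠ 2 → i ≠ 3 → X.δ 2 (f 2) = X.δ 2 (f 3)) :
    ∃ x : X _⦋3⦌, ∀ j, j ≠ i → X.δ j x = f j := by
  apply fill_faces h
  intro j k hj hk hjk
  fin_cases j <;> fin_cases k <;> try (exact absurd hjk (by decide))
  · exact h01 hj.symm hk.symm
  · exact h02 hj.symm hk.symm
  · exact h03 hj.symm hk.symm
  · exact h12 hj.symm hk.symm
  · exact h13 hj.symm hk.symm
  · exact h23 hj.symm hk.symm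

/-- edges are invertible on one side -/
def Inv (X : SSet.{0}) : Prop :=
  ∀ f : X _⦋1⦌, ∃ t : X _⦋2⦌, X.δ 0 t = f ∧ X.δ 1 t = X.σ 0 (X.δ 0 f)

lemma exists_x3 {X : SSet.{0}} (hX : Inner X) (hI : Inv X) (f : X _⦋1⦌) :
    ∃ x : X _⦋3⦌, X.δ 1 x = X.σ 0 f ∧ X.δ 1 (X.δ 0 x) = X.σ 0 (X.δ 0 f) := by
  obtain ⟨t0, h0, h0'⟩ := hI f
  obtain ⟨t3, h3, h3'⟩ := hI (X.δ 2 t0)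
  have e0 : X.δ 0 (X.σ 0 f) = f := by
    have := congrArg (fun g => g f) (X.δ_comp_σ_self (n := 1) (i := 0))
    exact this
  have e2 : X.δ 2 (X.σ 0 f) = X.σ 0 (X.δ 1 f) := by
    have := congrArg (fun g => g f) (X.δ_comp_σ_of_gt (n := 0) (i := 1) (j := 0) (by decide))
    exact this
  have e3 : X.δ 0 (X.δ 2 t0) = X.δ 1 (X.δ 0 t0) := by
    have := congrArg (fun g => g t0) (X.δ_comp_δ (n := 0) (i := 0) (j := 1) (by decide))
    exact this
  obtain ⟨x, hx⟩ := fill3 (hX 3 2 (by decide) (by decide)) ![t0, X.σ 0 f, X.σ 0 f, t3]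
    (by intros; change X.δ 0 t0 = X.δ 0 (X.σ 0 f); rw [h0, e0]) (by simp)
    (by intros; exact h3.symm) (by simp)
    (by
      intros; change X.δ 2 (X.σ 0 f) = X.δ 1 t3; rw [h3', e2, e3, h0]) (by simp)
  refine ⟨x, hx 1 (by decide), ?_⟩
  rw [show X.δ 0 x = t0 from hx 0 (by decide), h0']

end

section
open Opposite Simplicial

lemma compat_x3 {X : SSet.{0}} (f : X _⦋1⦌) (x : X _⦋3⦌) (h1 : X.δ 1 x = X.σ 0 f)
    (h2 : X.δ 1 (X.δ 0 x) = X.σ 0 (X.δ 0 f)) {d : SimplexCategory}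
    (ψ : Fin (d.len + 1) → Fin 4) (hψ : Monotone ψ) (ρ : Fin (d.len + 1) → Fin 2) (hρ : Monotone ρ)
    (hρψ : ∀ k, (ρ k).1 = if (ψ k).1 = 1 then 1 else (ψ k).1 - 2)
    (h : (∀ k, (ψ k).1 ≠ 1) ∨ ∀ k, (ψ k).1 ≠ 0 ∧ (ψ k).1 ≠ 2) :
    X.map (mkH (e := ⦋3⦌) ψ hψ).op x = X.map (mkH (e := ⦋1⦌) ρ hρ).op f := by
  rcases h with h | h
  · let φ : Fin (d.len + 1) → Fin 3 := fun k => (![0, 0, 1, 2] : Fin 4 → Fin 3) (ψ k)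
    have hφ : Monotone φ := fun a b hab => by
      have := hψ hab
      simp only [φ]
      generalize ψ a = u at *
      generalize ψ b = w at *
      revert this; revert u w; decide
    have e1 : mkH (e := ⦋3⦌) ψ hψ = mkH (e := ⦋2⦌) φ hφ ≫ SimplexCategory.δ 1 := by
      apply SimplexCategory.Hom.ext
      ext k : 2
      change ψ k = Fin.succAbove 1 (φ k)
      have := h k
      simp only [φ]
      generalize ψ k = u at *
      revert this; revert u; decide
    have e2 : mkH (e := ⦋1⦌) ρ hρ = mkH (e := ⦋2⦌) φ hφ ≫ SimplexCategory.σ 0 := by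
      apply SimplexCategory.Hom.ext
      ext k : 2
      change ρ k = Fin.predAbove 0 (φ k)
      have := h k
      have h' := hρψ k
      simp only [φ]
      generalize ψ k = u at *
      generalize ρ k = w at *
      revert this h'; revert u w; decide
    rw [e1, e2, op_comp, op_comp, Functor.map_comp_apply, Functor.map_comp_apply]
    exact congrArg _ h1
  · let φ : Fin (d.len + 1) → Fin 2 := fun k => (![0, 0, 1, 1] : Fin 4 → Fin 2) (ψ k)
    have hφ : Monotone φ := fun a b hab => by
      have := hψ hab
      simp only [φ]
      generalize ψ a = u at *
      generalize ψ b = w at *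
      revert this; revert u w; decide
    have e1 : mkH (e := ⦋3⦌) ψ hψ = mkH (e := ⦋1⦌) φ hφ ≫ SimplexCategory.δ 1 ≫ SimplexCategory.δ 0 := by
      apply SimplexCategory.Hom.ext
      ext k : 2
      change ψ k = Fin.succAbove 0 (Fin.succAbove 1 (φ k))
      have := h k
      simp only [φ]
      generalize ψ k = u at *
      revert this; revert u; decide
    have e2 : mkH (e := ⦋1⦌) ρ hρ = mkH (e := ⦋1⦌) φ hφ ≫ SimplexCategory.σ 0 ≫ SimplexCategory.δ 0 := by
      apply SimplexCategory.Hom.ext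
      ext k : 2
      change ρ k = Fin.succAbove 0 (Fin.predAbove 0 (φ k))
      have := h k
      have h' := hρψ k
      simp only [φ]
      generalize ψ k = u at *
      generalize ρ k = w at *
      revert this h'; revert u w; decide
    simp only [e1, e2, op_comp, Functor.map_comp_apply]
    exact congrArg _ h2

section outer

variable (n : ℕ)

def rr (v : Fin (n + 5)) : Fin (n + 3) := ⟨if v.1 = 1 then 1 else v.1 - 2, by split_ifs <;> omega⟩
def cc (v : Fin (n + 5)) : Fin 4 := ⟨min v.1 3, by omega⟩
def c1 (v : Fin (n + 5)) : Fin (n + 5) := ⟨if v.1 = 3 then 1 else v.1, by split_ifs <;> omega⟩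
def ee (v : Fin (n + 3)) : Fin (n + 5) := ⟨if v.1 = 0 then 0 else v.1 + 2, by split_ifs <;> omega⟩

variable {n}

/-- avoiding `k` -/
def Av (k : ℕ) (S : Set (Fin (n + 5))) : Prop := ∀ s ∈ S, s.1 ≠ k
/-- avoiding something above four -/
def Av4 (S : Set (Fin (n + 5))) : Prop := ∃ q, 4 ≤ q ∧ q < n + 5 ∧ Av q S

lemma Av.mono {k : ℕ} {S T : Set (Fin (n + 5))} (h : S ⊆ T) (hT : Av k T) : Av k S :=
  fun s hs => hT s (h hs)
lemma Av4.mono {S T : Set (Fin (n + 5))} (h : S ⊆ T) (hT : Av4 T) : Av4 S := by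
  obtain ⟨q, h1, h2, h3⟩ := hT
  exact ⟨q, h1, h2, h3.mono h⟩

def K3 (S : Set (Fin (n + 5))) : Prop := ∀ s ∈ S, s.1 ≤ 3
def KH (S : Set (Fin (n + 5))) : Prop :=
  (Av 1 S ∨ (Av 0 S ∧ Av 2 S)) ∧ ((Av 1 S ∧ Av 3 S) ∨ Av4 S)
def L1 (S : Set (Fin (n + 5))) : Prop := Av4 S ∨ (Av 1 S ∧ Av 3 S)
def L2 (S : Set (Fin (n + 5))) : Prop := L1 S ∨ Av 3 S
def K4 (S : Set (Fin (n + 5))) : Prop := Av 0 S ∧ Av 2 S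
def K5 (S : Set (Fin (n + 5))) : Prop := Av 2 S ∧ L2 S

lemma K3.mono (S T : Set (Fin (n + 5))) (h : S ⊆ T) (hT : K3 T) : K3 S :=
  fun s hs => hT s (h hs)
lemma KH.mono (S T : Set (Fin (n + 5))) (h : S ⊆ T) (hT : KH T) : KH S :=
  hT.imp (Or.imp (Av.mono h) (And.imp (Av.mono h) (Av.mono h)))
    (Or.imp (And.imp (Av.mono h) (Av.mono h)) (Av4.mono h))
lemma L1.mono (S T : Set (Fin (n + 5))) (h : S ⊆ T) (hT : L1 T) : L1 S :=
  hT.imp (Av4.mono h) (And.imp (Av.mono h) (Av.mono h))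
lemma L2.mono (S T : Set (Fin (n + 5))) (h : S ⊆ T) (hT : L2 T) : L2 S :=
  hT.imp (L1.mono _ _ h) (Av.mono h)
lemma K4.mono (S T : Set (Fin (n + 5))) (h : S ⊆ T) (hT : K4 T) : K4 S :=
  hT.imp (Av.mono h) (Av.mono h)
lemma K5.mono (S T : Set (Fin (n + 5))) (h : S ⊆ T) (hT : K5 T) : K5 S :=
  hT.imp (Av.mono h) (L2.mono _ _ h)

lemma Av.insert {k m : ℕ} (hm : m < n + 5) (hk : m ≠ k) {S : Set (Fin (n + 5))} (h : Av k S) :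
    Av k (insert ⟨m, hm⟩ S) := by
  rintro s (rfl | hs)
  · exact hk
  · exact h s hs
lemma Av4.insert {m : ℕ} (hm : m < n + 5) (hk : m < 4) {S : Set (Fin (n + 5))} (h : Av4 S) :
    Av4 (insert ⟨m, hm⟩ S) := by
  obtain ⟨q, h1, h2, h3⟩ := h
  exact ⟨q, h1, h2, h3.insert hm (by omega)⟩
lemma Av.sdiff {k m : ℕ} (hm : m < n + 5) (hk : m ≠ k) {S : Set (Fin (n + 5))}
    (h : Av k (S \ {⟨m, hm⟩})) : Av k S := by
  intro s hs hsk
  refine h s ⟨hs, ?_⟩ hsk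
  rintro rfl
  exact hk hsk
lemma Av4.sdiff {m : ℕ} (hm : m < n + 5) (hk : m < 4) {S : Set (Fin (n + 5))}
    (h : Av4 (S \ {⟨m, hm⟩})) : Av4 S := by
  obtain ⟨q, h1, h2, h3⟩ := h
  exact ⟨q, h1, h2, h3.sdiff hm (by omega)⟩
lemma not_av {k : ℕ} {S : Set (Fin (n + 5))} (h : ¬ Av k S) : ∃ s ∈ S, s.1 = k := by
  simpa [Av] using h

lemma step1 (S : Set (Fin (n + 5))) (h : L1 S) (h' : ¬ (K3 S ∨ KH S)) :
    L1 (insert ⟨3, by omega⟩ S) ∧ ¬ (K3 (S \ {⟨3, by omega⟩}) ∨ KH (S \ {⟨3, by omega⟩})) ∧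
    (∃ a ∈ S, a < ⟨3, by omega⟩) ∧ ∃ b ∈ S, ⟨3, by omega⟩ < b := by
  rw [not_or] at h'
  obtain ⟨h3, hH⟩ := h'
  have h4 : Av4 S := h.resolve_right fun hc => hH ⟨Or.inl hc.1, Or.inl hc⟩
  have h5 : ¬ (Av 1 S ∨ (Av 0 S ∧ Av 2 S)) := fun hc => hH ⟨hc, Or.inr h4⟩
  refine ⟨Or.inl (h4.insert _ (by omega)), ?_, ?_, ?_⟩
  · rintro (hc | hc)
    · apply h3
      intro s hs
      by_cases h6 : s = ⟨3, by omega⟩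
      · rw [h6]
      · exact hc s ⟨hs, h6⟩
    · exact h5 (hc.1.imp (Av.sdiff _ (by omega))
        (And.imp (Av.sdiff _ (by omega)) (Av.sdiff _ (by omega))))
  · obtain ⟨s, hs, h7⟩ := not_av fun hc => h5 (Or.inl hc)
    exact ⟨s, hs, by rw [Fin.lt_def]; simp only; omega⟩
  · simp only [K3, not_forall] at h3
    obtain ⟨s, hs, h7⟩ := h3
    exact ⟨s, hs, by rw [Fin.lt_def]; simp only; omega⟩

lemma step2 (S : Set (Fin (n + 5))) (h : L2 S) (h' : ¬ L1 S) :
    L2 (insert ⟨2, by omega⟩ S) ∧ ¬ (L1 (S \ {⟨2, by omega⟩})) ∧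
    (∃ a ∈ S, a < ⟨2, by omega⟩) ∧ ∃ b ∈ S, ⟨2, by omega⟩ < b := by
  have h3 := h.resolve_left h'
  refine ⟨Or.inr (h3.insert _ (by omega)), ?_, ?_, ?_⟩
  · intro hc
    exact h' (hc.imp (Av4.sdiff _ (by omega)) (And.imp (Av.sdiff _ (by omega)) (Av.sdiff _ (by omega))))
  · obtain ⟨s, hs, h7⟩ := not_av fun hc => h' (Or.inr ⟨hc, h3⟩)
    exact ⟨s, hs, by rw [Fin.lt_def]; simp only; omega⟩
  · obtain ⟨s, hs, h7⟩ := not_av fun hc => h' (Or.inl ⟨4, le_rfl, by omega, hc⟩)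
    exact ⟨s, hs, by rw [Fin.lt_def]; simp only; omega⟩

lemma step6 (S : Set (Fin (n + 5))) (h : Av 2 S) (h' : ¬ (K4 S ∨ K5 S)) :
    Av 2 (insert ⟨1, by omega⟩ S) ∧ ¬ (K4 (S \ {⟨1, by omega⟩}) ∨ K5 (S \ {⟨1, by omega⟩})) ∧
    (∃ a ∈ S, a < ⟨1, by omega⟩) ∧ ∃ b ∈ S, ⟨1, by omega⟩ < b := by
  rw [not_or] at h'
  obtain ⟨h4, h5⟩ := h'
  have h6 : ¬ L2 S := fun hc => h5 ⟨h, hc⟩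
  refine ⟨h.insert _ (by omega), ?_, ?_, ?_⟩
  · rintro (hc | hc)
    · exact h4 ⟨hc.1.sdiff _ (by omega), h⟩
    · apply h6
      rcases hc.2 with (hc | hc) | hc
      · exact Or.inl (Or.inl (hc.sdiff _ (by omega)))
      · exact Or.inr (hc.2.sdiff _ (by omega))
      · exact Or.inr (hc.sdiff _ (by omega))
  · obtain ⟨s, hs, h7⟩ := not_av fun hc => h4 ⟨hc, h⟩
    exact ⟨s, hs, by rw [Fin.lt_def]; simp only; omega⟩
  · obtain ⟨s, hs, h7⟩ := not_av fun hc => h6 (Or.inr hc)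
    exact ⟨s, hs, by rw [Fin.lt_def]; simp only; omega⟩

lemma KH_rr (S : Set (Fin (n + 5))) (h : KH S) :
    MonotoneOn (rr n) S ∧ hornK 0 (rr n '' S) := by
  constructor
  · intro a ha b hb hab
    have hab' : a.1 ≤ b.1 := hab
    simp only [rr, Fin.mk_le_mk]
    rcases h.1 with h1 | h1
    · have := h1 a ha
      have := h1 b hb
      split_ifs <;> omega
    · have := h1.1 a ha
      have := h1.2 a ha
      have := h1.1 b hb
      have := h1.2 b hb
      split_ifs <;> omega
  · rcases h.2 with h1 | ⟨q, h1, h2, h3⟩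
    · refine ⟨⟨1, by omega⟩, by simp [Fin.ext_iff], ?_⟩
      rintro ⟨s, hs, hc⟩
      have := h1.1 s hs
      have := h1.2 s hs
      simp only [rr, Fin.ext_iff] at hc
      split_ifs at hc <;> omega
    · refine ⟨⟨q - 2, by omega⟩, by simp [Fin.ext_iff]; omega, ?_⟩
      rintro ⟨s, hs, hc⟩
      have := h3 s hs
      simp only [rr, Fin.ext_iff] at hc
      split_ifs at hc <;> omega

lemma K4_c1 (S : Set (Fin (n + 5))) (h : K4 S) : MonotoneOn (c1 n) S ∧ L2 (c1 n '' S) := by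
  constructor
  · intro a ha b hb hab
    have hab' : a.1 ≤ b.1 := hab
    have := h.1 a ha
    have := h.2 a ha
    have := h.1 b hb
    have := h.2 b hb
    simp only [c1, Fin.mk_le_mk]
    split_ifs <;> omega
  · refine Or.inr ?_
    rintro _ ⟨s, hs, rfl⟩
    simp only [c1]
    split_ifs <;> omega

lemma outer0 {X : SSet.{0}} (hX : Inner X) (hI : Inv X) : Fill X (n + 2) 0 := by
  intro F
  have hε : hornK (0 : Fin (n + 3)) (Set.range (fun k : Fin 2 => (⟨k.1, by omega⟩ : Fin (n + 3)))) := by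
    refine ⟨⟨2, by omega⟩, by simp [Fin.ext_iff], ?_⟩
    rintro ⟨k, hk⟩
    simp only [Fin.ext_iff] at hk
    omega
  have hεm : Monotone (fun k : Fin 2 => (⟨k.1, by omega⟩ : Fin (n + 3))) := fun a b hab => hab
  let f : X _⦋1⦌ := F.app (d := ⦋1⦌) _ hεm hε
  obtain ⟨x, hx1, hx2⟩ := exists_x3 hX hI f
  let F3 : PMap X (Fin (n + 5)) K3 := (PMap.ofSimplex (n := ⦋3⦌) x).pull (cc n) K3
    (fun S hS => ⟨fun a ha b hb hab => by
      have hab' : a.1 ≤ b.1 := hab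
      simp only [cc, Fin.mk_le_mk]; omega, trivial⟩)
  let FH : PMap X (Fin (n + 5)) KH := F.pull (rr n) KH KH_rr
  let F1 := F3.glue FH K3.mono KH.mono (by
    intro d φ hm h3 hH
    have h3' : ∀ k, (φ k).1 ≤ 3 := fun k => h3 _ ⟨k, rfl⟩
    let ρ : Fin (d.len + 1) → Fin 2 := fun k => ⟨(rr n (φ k)).1, by
      have := h3' k
      simp only [rr]; split_ifs <;> omega⟩
    have hρ : Monotone ρ := fun a b hab =>
      (KH_rr _ hH).1 ⟨a, rfl⟩ ⟨b, rfl⟩ (hm hab)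
    have e1 := compat_x3 f x hx1 hx2 (cc n ∘ φ) (fun a b hab => by
      have hab' : (φ a).1 ≤ (φ b).1 := hm hab
      simp only [Function.comp, cc, Fin.mk_le_mk]; omega) ρ hρ (by
      intro k
      have := h3' k
      simp only [ρ, rr, cc, Function.comp, min_eq_left this]) (by
      refine hH.1.imp ?_ ?_
      · intro h k
        have := h _ ⟨k, rfl⟩
        simp only [Function.comp, cc]; omega
      · intro h k
        have := h.1 _ ⟨k, rfl⟩
        have := h.2 _ ⟨k, rfl⟩
        simp only [Function.comp, cc]; omega)
    have e2 := F.nat (mkH (e := ⦋1⦌) ρ hρ) _ hεm hε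
      (fun a b hab => hρ hab) (by
        have := (KH_rr _ hH).2
        rw [← Set.range_comp] at this
        exact this)
    exact e1.trans e2)
  obtain ⟨G1, hG1⟩ := ext_key hX L1 L1.mono ⟨3, by omega⟩ _ F1
    (fun S T h => Or.imp (K3.mono S T h) (KH.mono S T h))
    (by
      rintro S (h | h)
      · refine Or.inl ⟨4, le_rfl, by omega, fun s hs => ?_⟩
        have := h s hs; omega
      · exact h.2.symm) step1 rfl
  obtain ⟨G2, hG2⟩ := ext_key hX L2 L2.mono ⟨2, by omega⟩ _ G1 L1.mono (fun S h => Or.inl h)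
    step2 rfl
  have hG2H : ∀ {d : SimplexCategory} (φ : Fin (d.len + 1) → Fin (n + 5)) (hm : Monotone φ)
      (h : KH (Set.range φ)) (h' : L2 (Set.range φ)), G2.app φ hm h' = FH.app φ hm h := by
    intro d φ hm h h'
    have h1 : L1 (Set.range φ) := h.2.symm
    rw [hG2 φ hm h1 h', hG1 φ hm (Or.inr h) h1]
    exact PMap.glue_right _ _ _ _ _ _ _ h _
  let G4 : PMap X (Fin (n + 5)) K4 := G2.pull (c1 n) K4 K4_c1
  let G5 : PMap X (Fin (n + 5)) K5 := G2.res (fun S h => h.2)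
  let F6 := G4.glue G5 K4.mono K5.mono (by
    intro d φ hm h4 h5
    by_cases h3 : Av 3 (Set.range φ)
    · refine G2.app_congr ?_ _ _ _ _
      funext k
      have := h3 _ ⟨k, rfl⟩
      simp [c1, this]
    · have hq : Av4 (Set.range φ) := by
        rcases h5.2 with (h | h) | h
        · exact h
        · exact absurd h.2 h3
        · exact absurd h h3
      have hH : KH (Set.range φ) := ⟨Or.inr h4, Or.inr hq⟩
      have hH' : KH (Set.range (c1 n ∘ φ)) := by
        refine ⟨Or.inr ⟨?_, ?_⟩, Or.inr ?_⟩
        · rintro _ ⟨k, rfl⟩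
          have := h4.1 _ ⟨k, rfl⟩
          simp only [Function.comp, c1]; split_ifs; omega; exact this
        · rintro _ ⟨k, rfl⟩
          have := h4.2 _ ⟨k, rfl⟩
          simp only [Function.comp, c1]; split_ifs; omega; exact this
        · obtain ⟨q, h1, h2, h3⟩ := hq
          refine ⟨q, h1, h2, ?_⟩
          rintro _ ⟨k, rfl⟩
          have := h3 _ ⟨k, rfl⟩
          simp only [Function.comp, c1]; split_ifs; omega; exact this
      have e1 := hG2H φ hm hH h5.2
      have hm' : Monotone (c1 n ∘ φ) := fun a b hab => (K4_c1 _ h4).1 ⟨a, rfl⟩ ⟨b, rfl⟩ (hm hab)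
      have e2 := hG2H (c1 n ∘ φ) hm' hH' (Or.inl hH'.2.symm)
      refine Eq.trans e2 (Eq.trans ?_ e1.symm)
      refine F.app_congr ?_ _ _ _ _
      funext k
      have := h4.1 _ ⟨k, rfl⟩
      have := h4.2 _ ⟨k, rfl⟩
      simp only [Function.comp, rr, c1, Fin.ext_iff]
      split_ifs <;> omega)
  obtain ⟨G6, hG6⟩ := ext_key hX (Av 2) (fun S T h => Av.mono h) ⟨1, by omega⟩ _ F6
    (fun S T h => Or.imp (K4.mono S T h) (K5.mono S T h))
    (by
      rintro S (h | h)
      · exact h.2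
      · exact h.1) step6 rfl
  have hem : Monotone (ee n) := fun a b hab => by
    have hab' : a.1 ≤ b.1 := hab
    simp only [ee, Fin.mk_le_mk]
    split_ifs <;> omega
  have he2 : Av 2 (Set.range (ee n)) := by
    rintro _ ⟨k, rfl⟩
    simp only [ee]; split_ifs <;> omega
  refine ⟨G6.app (d := ⦋n + 2⦌) (ee n) hem he2, ?_⟩
  intro d φ hm h
  have h2 : Av 2 (Set.range (ee n ∘ φ)) := Av.mono (Set.range_comp_subset_range _ _) he2
  have e1 := G6.nat (mkH (e := ⦋n + 2⦌) φ hm) (ee n) hem he2 (hem.comp hm) h2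
  have hH : KH (Set.range (ee n ∘ φ)) := by
    have h1 : Av 1 (Set.range (ee n ∘ φ)) := by
      rintro _ ⟨k, rfl⟩
      simp only [ee, Function.comp]; split_ifs <;> omega
    refine ⟨Or.inl h1, ?_⟩
    obtain ⟨j, hj, hjr⟩ := h
    have hj0 : j.1 ≠ 0 := fun hc => hj (Fin.ext hc)
    have h3 : Av (j.1 + 2) (Set.range (ee n ∘ φ)) := by
      rintro _ ⟨k, rfl⟩ hc
      apply hjr
      refine ⟨k, Fin.ext ?_⟩
      simp only [ee, Function.comp] at hc
      split_ifs at hc; omega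
    by_cases hj1 : j.1 = 1
    · left
      rw [hj1] at h3
      exact ⟨h1, h3⟩
    · right
      exact ⟨j.1 + 2, by omega, by omega, h3⟩
  have hL2 : L2 (Set.range (ee n ∘ φ)) := Or.inl hH.2.symm
  have e2 := hG6 (ee n ∘ φ) (hem.comp hm) (Or.inr ⟨h2, hL2⟩) h2
  have e3 : F6.app (ee n ∘ φ) (hem.comp hm) (Or.inr ⟨h2, hL2⟩) = G5.app (ee n ∘ φ) (hem.comp hm) ⟨h2, hL2⟩ :=
    PMap.glue_right _ _ _ _ _ _ _ _ _
  have e4 := hG2H (ee n ∘ φ) (hem.comp hm) hH hL2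
  refine Eq.trans ?_ (e1.trans (e2.trans (e3.trans e4))).symm
  refine F.app_congr ?_ _ _ _ _
  funext k
  simp only [Function.comp, rr, ee, Fin.ext_iff]
  by_cases h0 : (φ k).1 = 0
  · simp [h0]
  · have h1 : (φ k).1 + 2 ≠ 1 := by omega
    simp [h0, h1]

end outer

end

section
open Opposite Simplicial

lemma hornK_rev {n : ℕ} {i : Fin (n + 1)} {d : SimplexCategory} {φ : Fin (d.len + 1) → Fin (n + 1)}
    (h : hornK i (Set.range φ)) : hornK i.rev (Set.range (Fin.rev ∘ φ ∘ Fin.rev)) := by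
  obtain ⟨j, hj, hjr⟩ := h
  refine ⟨j.rev, by simpa using hj, ?_⟩
  rintro ⟨k, hk⟩
  exact hjr ⟨k.rev, by simpa using hk⟩

lemma mono_rev {n : ℕ} {d : SimplexCategory} {φ : Fin (d.len + 1) → Fin (n + 1)}
    (h : Monotone φ) : Monotone (Fin.rev ∘ φ ∘ Fin.rev) :=
  fun a b hab => Fin.rev_le_rev.2 (h (Fin.rev_le_rev.2 hab))

lemma fill_op {X Y : SSet.{0}} (e : ∀ d : SimplexCategory, X.obj (op d) ≃ Y.obj (op d))
    (he : ∀ {d d' : SimplexCategory} (θ : d ⟶ d') (x : X.obj (op d')),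
      e d (X.map θ.op x) = Y.map (SimplexCategory.rev.map θ).op (e d' x)) {n : ℕ} {i : Fin (n + 1)}
    (h : Fill X n i) : Fill Y n i.rev := by
  intro F
  have hh : ∀ {d : SimplexCategory} {φ : Fin (d.len + 1) → Fin (n + 1)}, hornK i (Set.range φ) →
    hornK i.rev (Set.range (Fin.rev ∘ φ ∘ Fin.rev)) := hornK_rev
  let F' : PMap X (Fin (n + 1)) (hornK i) :=
    { app := fun {d} φ hm hK => (e d).symm (F.app (d := d) (Fin.rev ∘ φ ∘ Fin.rev) (mono_rev hm) (hh hK))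
      nat := by
        intro d d' θ φ hm hK hm' hK'
        rw [Equiv.eq_symm_apply, he, Equiv.apply_symm_apply]
        refine (F.nat (d := d) (d' := d') (SimplexCategory.rev.map θ) _ _ _ (fun a b hab => ?_) ?_).trans
          (F.app_congr ?_ _ _ _ _)
        · exact mono_rev hm ((SimplexCategory.rev.map θ).toOrderHom.monotone hab)
        · have := hh hK'
          convert this using 2
          funext k
          simp
        · funext k
          simp }
  obtain ⟨x, hx⟩ := h F'
  refine ⟨e ⦋n⦌ x, ?_⟩
  intro d φ hm hK
  have hK' : hornK i (Set.range (Fin.rev ∘ φ ∘ Fin.rev)) := by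
    have := hornK_rev hK
    rwa [Fin.rev_rev] at this
  have h1 := congrArg (e d) (hx (d := d) (Fin.rev ∘ φ ∘ Fin.rev) (mono_rev hm) hK')
  rw [he] at h1
  have h2 : SimplexCategory.rev.map (mkH (e := ⦋n⦌) (Fin.rev ∘ φ ∘ Fin.rev) (mono_rev hm))
      = mkH (e := ⦋n⦌) φ hm := by
    apply SimplexCategory.Hom.ext
    ext k : 2
    change Fin.rev (Fin.rev (φ (Fin.rev (Fin.rev k)))) = φ k
    simp
  rw [h2] at h1
  refine Eq.trans ?_ h1
  simp only [F', Equiv.apply_symm_apply]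
  refine F.app_congr ?_ _ _ _ _
  funext k
  simp

lemma fill_op1 {X : SSet.{0}} {n : ℕ} {i : Fin (n + 1)} (h : Fill X n i) : Fill X.op n i.rev :=
  fill_op (X := X) (Y := X.op) (fun d => SSet.opObjEquiv.symm) (fun {d d'} θ x => by
    rw [SSet.op_map]
    simp) h

lemma fill_op2 {X : SSet.{0}} {n : ℕ} {i : Fin (n + 1)} (h : Fill X.op n i) : Fill X n i.rev :=
  fill_op (X := X.op) (Y := X) (fun d => SSet.opObjEquiv) (fun {d d'} θ x => by
    rw [SSet.op_map]
    simp) h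

lemma Inner.op {X : SSet.{0}} (h : Inner X) : Inner X.op := by
  intro n i h0 h1
  rw [← Fin.rev_rev i]
  apply fill_op1
  apply h
  · rw [← Fin.rev_lt_rev]; simpa using h1
  · rw [← Fin.rev_lt_rev]; simpa using h0

/-- the dual condition -/
def Inv' (X : SSet.{0}) : Prop :=
  ∀ f : X _⦋1⦌, ∃ t : X _⦋2⦌, X.δ 2 t = f ∧ X.δ 1 t = X.σ 0 (X.δ 1 f)

lemma outerLast {X : SSet.{0}} (hX : Inner X) (hI : Inv' X) (n : ℕ) : Fill X (n + 2) (Fin.last _) := by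
  rw [← Fin.rev_zero]
  apply fill_op2
  apply outer0 hX.op
  intro f
  obtain ⟨t, h1, h2⟩ := hI (SSet.opObjEquiv f)
  refine ⟨SSet.opObjEquiv.symm t, ?_, ?_⟩
  · rw [SSet.op_δ]
    exact congrArg SSet.opObjEquiv.symm h1
  · rw [SSet.op_δ, SSet.op_σ, SSet.op_δ]
    exact congrArg SSet.opObjEquiv.symm h2

lemma fill_one {X : SSet.{0}} (i : Fin 2) : Fill X 1 i := by
  intro F
  have hii : i.rev ≠ i := by clear F; revert i; decide
  have hr : ∀ {d : SimplexCategory}, hornK i (Set.range (fun _ : Fin (d.len + 1) => i)) := by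
    intro d
    refine ⟨i.rev, hii, ?_⟩
    rintro ⟨k, hk⟩
    exact hii hk.symm
  let x0 : X _⦋0⦌ := F.app (d := ⦋0⦌) (fun _ => i) monotone_const hr
  refine ⟨X.map (mkH (d := ⦋1⦌) (e := ⦋0⦌) (fun _ => 0) monotone_const).op x0, ?_⟩
  intro d φ hm hK
  have hφ : φ = fun _ => i := by
    funext k
    obtain ⟨j, hj, hjr⟩ := hK
    have : φ k ≠ j := fun hc => hjr ⟨k, hc⟩
    clear F x0 hjr
    generalize φ k = u at *
    revert this hj
    clear hr hii
    revert u i j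
    decide
  rw [← Functor.map_comp_apply, ← op_comp]
  refine Eq.trans ?_ (F.nat (mkH (d := d) (e := ⦋0⦌) (fun _ => 0) monotone_const) (fun _ => i)
    monotone_const hr monotone_const hr).symm
  exact F.app_congr hφ _ _ _ _

lemma kan_of {X : SSet.{0}} (h : ∀ (n : ℕ) (i : Fin (n + 2)), Fill X (n + 1) i) :
    SSet.KanComplex X := by
  rw [SSet.KanComplex.iff]
  intro n i f hf
  obtain ⟨φ, hφ⟩ := hf.exists_desc
  obtain ⟨σ, hσ⟩ := fill_iff.1 (h n i) φ
  refine ⟨σ, fun j hj => ?_⟩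
  rw [← hφ j hj, hσ, SSet.horn.ι_ι_assoc]

lemma fill_of_kan {X : SSet.{0}} (h : SSet.KanComplex X) (n : ℕ) (i : Fin (n + 2)) :
    Fill X (n + 1) i :=
  fill_iff.2 fun H => SSet.KanComplex.hornFilling H

lemma inner_of_quasi {X : SSet.{0}} (h : SSet.Quasicategory X) : Inner X := by
  intro n i h0 h1
  exact fill_iff.2 fun H => SSet.Quasicategory.hornFilling h0 h1 H

lemma kan_of_inv {X : SSet.{0}} (hX : Inner X) (h : Inv X) (h' : Inv' X) : SSet.KanComplex X := by
  apply kan_of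
  intro n i
  obtain _ | n := n
  · exact fill_one i
  by_cases h0 : i = 0
  · subst h0; exact outer0 hX h
  by_cases h1 : i = Fin.last _
  · subst h1; exact outerLast hX h' n
  exact hX _ _ (Fin.pos_iff_ne_zero.2 h0) (Fin.lt_last_iff_ne_last.2 h1)

end

section
open Opposite Simplicial
open SSet.Truncated SimplicialObject.Truncated

abbrev tr (X : SSet.{0}) : SSet.Truncated.{0} 2 := (SSet.truncation 2).obj X

section
variable {X : SSet.{0}} {x y z : (tr X) _⦋0⦌₂}

def toV (x : (tr X) _⦋0⦌₂) : X _⦋0⦌ := x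
def ed (e : Edge x y) : X _⦋1⦌ := e.edge

def edgeMk (e : X _⦋1⦌) (h1 : X.δ 1 e = toV x) (h0 : X.δ 0 e = toV y) :
    Edge x y := { edge := e, src_eq := h1, tgt_eq := h0 }

lemma ed_edgeMk (e : X _⦋1⦌) (h1 : X.δ 1 e = toV x) (h0 : X.δ 0 e = toV y) :
    ed (edgeMk e h1 h0) = e := rfl

variable {e : Edge x y} {f : Edge y z} {g : Edge x z}

def csMk (t : X _⦋2⦌) (h2 : X.δ 2 t = ed e) (h0 : X.δ 0 t = ed f) (h1 : X.δ 1 t = ed g) :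
    Edge.CompStruct e f g := { simplex := t, d₂ := h2, d₀ := h0, d₁ := h1 }

def sx (s : Edge.CompStruct e f g) : X _⦋2⦌ := s.simplex

lemma e_src (e : Edge x y) : X.δ 1 (ed e) = toV x := e.src_eq
lemma e_tgt (e : Edge x y) : X.δ 0 (ed e) = toV y := e.tgt_eq
lemma c_d2 (s : Edge.CompStruct e f g) : X.δ 2 (sx s) = ed e := s.d₂
lemma c_d0 (s : Edge.CompStruct e f g) : X.δ 0 (sx s) = ed f := s.d₀
lemma c_d1 (s : Edge.CompStruct e f g) : X.δ 1 (sx s) = ed g := s.d₁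

lemma id_edge (x : (tr X) _⦋0⦌₂) : ed (Edge.id x) = X.σ 0 (toV x) := rfl
end

lemma dd2 (X : SSet.{0}) (t : X _⦋2⦌) : X.δ 0 (X.δ 1 t) = X.δ 0 (X.δ 0 t) ∧
    X.δ 0 (X.δ 2 t) = X.δ 1 (X.δ 0 t) ∧ X.δ 1 (X.δ 2 t) = X.δ 1 (X.δ 1 t) :=
  ⟨congrArg (fun g => g t) (X.δ_comp_δ (n := 0) (i := 0) (j := 0) (by decide)),
   congrArg (fun g => g t) (X.δ_comp_δ (n := 0) (i := 0) (j := 1) (by decide)),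
   congrArg (fun g => g t) (X.δ_comp_δ (n := 0) (i := 1) (j := 1) (by decide))⟩

lemma dd3 (X : SSet.{0}) (t : X _⦋3⦌) (i j : Fin 3) (h : i ≤ j) :
    X.δ i (X.δ j.succ t) = X.δ j (X.δ i.castSucc t) :=
  congrArg (fun g => g t) (X.δ_comp_δ (n := 1) (i := i) (j := j) h)

lemma quasi₂ {X : SSet.{0}} (hX : Inner X) : Quasicategory₂ (tr X) where
  fill21 {x₀ x₁ x₂} e f := by
    obtain ⟨t, ht⟩ := fill2 (hX 2 1 (by decide) (by decide)) ![ed f, ed f, ed e] (by simp)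
      (by intros; exact (e_src f).trans (e_tgt e).symm) (by simp)
    have h0 : X.δ 0 t = ed f := ht 0 (by decide)
    have h2 : X.δ 2 t = ed e := ht 2 (by decide)
    obtain ⟨a, b, c⟩ := dd2 X t
    exact ⟨edgeMk (X.δ 1 t) (by rw [← c, h2, e_src]) (by rw [a, h0, e_tgt]),
      csMk t h2 h0 rfl⟩
  fill31 f₃ f₀ f₂ := by
    obtain ⟨t, ht⟩ := fill3 (hX 3 1 (by decide) (by decide)) ![sx f₀, sx f₀, sx f₂, sx f₃] (by simp)
      (by intros; exact (c_d1 f₀).trans (c_d0 f₂).symm)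
      (by intros; exact (c_d2 f₀).trans (c_d0 f₃).symm) (by simp) (by simp)
      (by intros; exact (c_d2 f₂).trans (c_d2 f₃).symm)
    have h0 : X.δ 0 t = sx f₀ := ht 0 (by decide)
    have h2 : X.δ 2 t = sx f₂ := ht 2 (by decide)
    have h3 : X.δ 3 t = sx f₃ := ht 3 (by decide)
    have a : X.δ 0 (X.δ 1 t) = X.δ 0 (X.δ 0 t) := dd3 X t 0 0 (by decide)
    have b : X.δ 1 (X.δ 2 t) = X.δ 1 (X.δ 1 t) := dd3 X t 1 1 (by decide)
    have c : X.δ 1 (X.δ 3 t) = X.δ 2 (X.δ 1 t) := dd3 X t 1 2 (by decide)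
    exact ⟨csMk (X.δ 1 t) (by rw [← c, h3, c_d1]) (by rw [a, h0, c_d0]) (by rw [← b, h2, c_d1])⟩
  fill32 f₃ f₀ f₁ := by
    obtain ⟨t, ht⟩ := fill3 (hX 3 2 (by decide) (by decide)) ![sx f₀, sx f₁, sx f₁, sx f₃]
      (by intros; exact (c_d0 f₀).trans (c_d0 f₁).symm) (by simp)
      (by intros; exact (c_d2 f₀).trans (c_d0 f₃).symm) (by simp)
      (by intros; exact (c_d2 f₁).trans (c_d1 f₃).symm) (by simp)
    have h0 : X.δ 0 t = sx f₀ := ht 0 (by decide)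
    have h1 : X.δ 1 t = sx f₁ := ht 1 (by decide)
    have h3 : X.δ 3 t = sx f₃ := ht 3 (by decide)
    have a : X.δ 0 (X.δ 2 t) = X.δ 1 (X.δ 0 t) := dd3 X t 0 1 (by decide)
    have b : X.δ 1 (X.δ 2 t) = X.δ 1 (X.δ 1 t) := dd3 X t 1 1 (by decide)
    have c : X.δ 2 (X.δ 3 t) = X.δ 2 (X.δ 2 t) := dd3 X t 2 2 (by decide)
    exact ⟨csMk (X.δ 2 t) (by rw [← c, h3, c_d2]) (by rw [a, h0, c_d1]) (by rw [b, h1, c_d1])⟩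

lemma kan_edge_right {X : SSet.{0}} (h : SSet.KanComplex X) {x y : (tr X) _⦋0⦌₂} (e : Edge x y) :
    ∃ g : Edge y x, Nonempty (Edge.CompStruct e g (Edge.id x)) := by
  obtain ⟨t, ht⟩ := fill2 (fill_of_kan h 1 0) ![ed e, ed (Edge.id x), ed e] (by simp) (by simp)
    (by intros; exact (e_src (Edge.id x)).trans (e_src e).symm)
  have h1 : X.δ 1 t = ed (Edge.id x) := ht 1 (by decide)
  have h2 : X.δ 2 t = ed e := ht 2 (by decide)
  obtain ⟨a, b, c⟩ := dd2 X t
  exact ⟨edgeMk (X.δ 0 t) (by rw [← b, h2, e_tgt]) (by rw [← a, h1, e_tgt]), ⟨csMk t h2 rfl h1⟩⟩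

lemma kan_edge_left {X : SSet.{0}} (h : SSet.KanComplex X) {x y : (tr X) _⦋0⦌₂} (e : Edge x y) :
    ∃ g : Edge y x, Nonempty (Edge.CompStruct g e (Edge.id y)) := by
  obtain ⟨t, ht⟩ := fill2 (fill_of_kan h 1 2) ![ed e, ed (Edge.id y), ed e]
    (by intros; exact (e_tgt e).trans (e_tgt (Edge.id y)).symm) (by simp) (by simp)
  have h1 : X.δ 1 t = ed (Edge.id y) := ht 1 (by decide)
  have h0 : X.δ 0 t = ed e := ht 0 (by decide)
  obtain ⟨a, b, c⟩ := dd2 X t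
  exact ⟨edgeMk (X.δ 2 t) (by rw [c, h1, e_src]) (by rw [b, h0, e_src]), ⟨csMk t rfl h0 h1⟩⟩

lemma iso_of_kan {X : SSet.{0}} (h : SSet.KanComplex X) {a b : (tr X).HomotopyCategory} (f : a ⟶ b) :
    IsIso f := by
  have hW : MorphismProperty.isomorphisms (tr X).HomotopyCategory = ⊤ := by
    apply HomotopyCategory.morphismProperty_eq_top
    intro x y e
    obtain ⟨g, ⟨s⟩⟩ := kan_edge_right h e
    obtain ⟨g', ⟨s'⟩⟩ := kan_edge_left h e
    have k := HomotopyCategory.homMk_comp_homMk s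
    have k' := HomotopyCategory.homMk_comp_homMk s'
    rw [HomotopyCategory.homMk_id] at k k'
    refine ⟨⟨HomotopyCategory.homMk g, k, ?_⟩⟩
    have : HomotopyCategory.homMk g' = HomotopyCategory.homMk g := by
      rw [← Category.comp_id (HomotopyCategory.homMk g'), ← k, ← Category.assoc, k',
        Category.id_comp]
    rw [← this, k']
  have : MorphismProperty.isomorphisms _ f := by rw [hW]; trivial
  exact this

lemma edge_inv {X : SSet.{0}} [Quasicategory₂ (tr X)]
    (h : ∀ {a b : (tr X).HomotopyCategory} (f : a ⟶ b), IsIso f) {x y : (tr X) _⦋0⦌₂} (e : Edge x y) :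
    ∃ g : Edge y x, Nonempty (Edge.CompStruct e g (Edge.id x)) ∧
      Nonempty (Edge.CompStruct g e (Edge.id y)) := by
  let L : (tr X).HomotopyCategory ⥤ HomotopyCategory₂ (tr X) :=
    HomotopyCategory.lift (fun x => HomotopyCategory₂.mk x) (fun e => HomotopyCategory₂.homMk e)
      (fun x => HomotopyCategory₂.homMk_id ⟨x⟩) (fun s => s.homotopyCategory₂_fac)
  have hL : L.map (HomotopyCategory.homMk e) = HomotopyCategory₂.homMk e :=
    HomotopyCategory.lift_map_homMk ..
  have := h (HomotopyCategory.homMk e)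
  have hi : IsIso (HomotopyCategory₂.homMk e) := by
    rw [← hL]
    exact Functor.map_isIso L _
  obtain ⟨g, hg⟩ := HomotopyCategory₂.homMk_surjective (inv (HomotopyCategory₂.homMk e))
  refine ⟨g, ?_, ?_⟩
  · rw [Edge.CompStruct.nonempty_iff, hg, IsIso.hom_inv_id]; rfl
  · rw [Edge.CompStruct.nonempty_iff, hg, IsIso.inv_hom_id]; rfl

lemma kan_of_iso {X : SSet.{0}} (hX : Inner X)
    (h : ∀ {a b : (tr X).HomotopyCategory} (f : a ⟶ b), IsIso f) : SSet.KanComplex X := by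
  have := quasi₂ hX
  have key (f : X _⦋1⦌) := edge_inv h (edgeMk (X := X) (x := X.δ 1 f) (y := X.δ 0 f) f rfl rfl)
  apply kan_of_inv hX
  · intro f
    obtain ⟨g, -, ⟨s⟩⟩ := key f
    exact ⟨sx s, c_d0 s, c_d1 s⟩
  · intro f
    obtain ⟨g, ⟨s⟩, -⟩ := key f
    exact ⟨sx s, c_d2 s, c_d1 s⟩

lemma iso_transfer {C D : Cat.{0, 0}} (e : C ≅ D) (h : ∀ {a b : C} (f : a ⟶ b), IsIso f)
    {a b : D} (f : a ⟶ b) : IsIso f := by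
  let E := Cat.equivOfIso e
  have := h (E.inverse.map f)
  exact isIso_of_reflects_iso f E.inverse

end

theorem kanComplex_iff_ho_groupoid
    (ho : SSet.{0} ⥤ Cat.{0, 0}) (adj : ho ⊣ nerveFunctor)
    (X : SSet.{0}) (hX : SSet.Quasicategory X) :
    SSet.KanComplex X ↔ ∀ {a b : ho.obj X} (f : a ⟶ b), IsIso f := by
  have i : ho.obj X ≅ SSet.hoFunctor.obj X := (adj.leftAdjointUniq nerveAdjunction).app X
  constructor
  · intro h
    exact iso_transfer i.symm (fun f => iso_of_kan h f)
  · intro h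
    exact kan_of_iso (inner_of_quasi hX) (fun f => iso_transfer i h f)

end Stmt6
end
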